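/- (Existence and uniqueness) Suppose |f(t,x) − f(t,y)| ≤ κ₃(t)·|x−y| for all t ∈ (a,b) and x, y ∈ ℝ, where κ₃: (a,b) → [0,∞) is measurable with ψ'·κ₃ ∈ L¹(a,b); |𝒢(x) − 𝒢(y)| ≤ κ₄·‖x−y‖ for all x, y ∈ C([a,b],ℝ) with κ₄ ∈ (0,1); 𝒢(0) = 0 or more generally 𝒢: C([a,b],ℝ) → ℝ is given; f(·,u) is measurable for each u ∈ ℝ; and t ↦ ψ'(t)·f(t,0) is in L¹(a,b). If κ₄ + G_max·∫_a^b ψ'(τ)κ₃(τ) dτ < 1, where G_max = L^{α+β−1}/Γ(α+β), then the problem has exactly one mild solution. -/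

import Mathlib

open MeasureTheory Set

/-- The Green function of the sequential fractional boundary value problem. -/
noncomputable def G (a b α β : ℝ) (ψ : ℝ → ℝ) (τ t : ℝ) : ℝ :=
  if τ ≤ t then
    (ψ t - ψ a) ^ β * (ψ b - ψ τ) ^ (α + β - 1) /
        (Real.Gamma (α + β) * (ψ b - ψ a) ^ β) -
      (ψ t - ψ τ) ^ (α + β - 1) / Real.Gamma (α + β)
  else
    (ψ t - ψ a) ^ β * (ψ b - ψ τ) ^ (α + β - 1) /
      (Real.Gamma (α + β) * (ψ b - ψ a) ^ β)

/-- The supremum norm of a function over the interval `[a,b]`. -/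
noncomputable def supNorm (a b : ℝ) (x : ℝ → ℝ) : ℝ :=
  ⨆ t : Set.Icc a b, |x ↑t|

lemma aux_simple {μ : Measure ℝ} (f : ℝ → ℝ → ℝ)
    (hf_meas : ∀ u : ℝ, AEStronglyMeasurable (fun t => f t u) μ) (s : SimpleFunc ℝ ℝ) :
    AEStronglyMeasurable (fun t => f t (s t)) μ := by
  have h : (fun t => f t (s t)) =
      ∑ u ∈ s.range, (s ⁻¹' {u}).indicator (fun t => f t u) := by
    funext t
    rw [Finset.sum_apply, Finset.sum_eq_single (s t)]
    · simp
    · intro u _ hu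
      apply Set.indicator_of_notMem
      simpa using hu.symm
    · intro h
      exact absurd (s.mem_range_self t) h
  rw [h]
  apply Finset.aestronglyMeasurable_sum
  intro u _
  exact (hf_meas u).indicator (s.measurableSet_fiber u)

lemma aux_carath {a b : ℝ} (f : ℝ → ℝ → ℝ) (κ₃ : ℝ → ℝ)
    (hf_lip : ∀ t ∈ Set.Ioo a b, ∀ u v : ℝ, |f t u - f t v| ≤ κ₃ t * |u - v|)
    (hf_meas : ∀ u : ℝ,
      AEStronglyMeasurable (fun t => f t u) (volume.restrict (Set.Ioo a b)))
    (x : ℝ → ℝ) (hx : Continuous x) :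
    AEStronglyMeasurable (fun t => f t (x t)) (volume.restrict (Set.Ioo a b)) := by
  have hxm := hx.stronglyMeasurable
  refine aestronglyMeasurable_of_tendsto_ae Filter.atTop
    (f := fun n t => f t (hxm.approx n t)) (fun n => aux_simple f hf_meas _) ?_
  filter_upwards [ae_restrict_mem measurableSet_Ioo] with t ht
  have h1 := hxm.tendsto_approx t
  rw [tendsto_iff_dist_tendsto_zero] at h1 ⊢
  have h2 := h1.const_mul (κ₃ t)
  rw [mul_zero] at h2
  refine squeeze_zero (fun _ => dist_nonneg) (fun n => ?_) h2
  exact hf_lip t ht _ _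

/-- a continuous expression agreeing with `G` on the square. -/
noncomputable def Gc (a b α β : ℝ) (ψ : ℝ → ℝ) (τ t : ℝ) : ℝ :=
    (ψ t - ψ a) ^ β * (ψ b - ψ τ) ^ (α + β - 1) /
        (Real.Gamma (α + β) * (ψ b - ψ a) ^ β) -
      (max (ψ t - ψ τ) 0) ^ (α + β - 1) / Real.Gamma (α + β)

lemma G_eq_Gc {a b α β : ℝ} {ψ : ℝ → ℝ} (hαβ : 1 < α + β)
    (hm : MonotoneOn ψ (Icc a b)) {τ t : ℝ} (hτ : τ ∈ Icc a b) (ht : t ∈ Icc a b) :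
    G a b α β ψ τ t = Gc a b α β ψ τ t := by
  unfold G Gc
  split_ifs with h
  · rw [max_eq_left (sub_nonneg.2 (hm hτ ht h))]
  · rw [max_eq_right (sub_nonpos.2 (hm ht hτ (not_le.1 h).le)),
      Real.zero_rpow (by linarith)]
    simp

lemma Gc_bound {a b α β : ℝ} {ψ : ℝ → ℝ} (hab : a < b) (hβ0 : 0 < β) (hαβ : 1 < α + β)
    (hm : StrictMonoOn ψ (Icc a b)) {τ t : ℝ} (hτ : τ ∈ Icc a b) (ht : t ∈ Icc a b) :
    |Gc a b α β ψ τ t| ≤ (ψ b - ψ a) ^ (α + β - 1) / Real.Gamma (α + β) := by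
  have ha : a ∈ Icc a b := ⟨le_rfl, hab.le⟩
  have hb : b ∈ Icc a b := ⟨hab.le, le_rfl⟩
  have hL := hm ha hb hab
  have h1 := hm.monotoneOn ha ht ht.1
  have h2 := hm.monotoneOn ht hb ht.2
  have h3 := hm.monotoneOn ha hτ hτ.1
  have h4 := hm.monotoneOn hτ hb hτ.2
  have hΓ : 0 < Real.Gamma (α + β) := Real.Gamma_pos_of_pos (by linarith)
  have hLβ : 0 < (ψ b - ψ a) ^ β := Real.rpow_pos_of_pos (by linarith) _
  have hA0 : 0 ≤ (ψ t - ψ a) ^ β := Real.rpow_nonneg (by linarith) _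
  have hA1 : (ψ t - ψ a) ^ β ≤ (ψ b - ψ a) ^ β :=
    Real.rpow_le_rpow (by linarith) (by linarith) hβ0.le
  have hB0 : 0 ≤ (ψ b - ψ τ) ^ (α + β - 1) := Real.rpow_nonneg (by linarith) _
  have hB1 : (ψ b - ψ τ) ^ (α + β - 1) ≤ (ψ b - ψ a) ^ (α + β - 1) :=
    Real.rpow_le_rpow (by linarith) (by linarith) (by linarith)
  have hC0 : 0 ≤ (max (ψ t - ψ τ) 0) ^ (α + β - 1) :=
    Real.rpow_nonneg (le_max_right _ _) _
  have hC1 : (max (ψ t - ψ τ) 0) ^ (α + β - 1) ≤ (ψ b - ψ a) ^ (α + β - 1) :=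
    Real.rpow_le_rpow (le_max_right _ _) (max_le (by linarith) (by linarith)) (by linarith)
  unfold Gc
  have e1 : (ψ t - ψ a) ^ β * (ψ b - ψ τ) ^ (α + β - 1) /
        (Real.Gamma (α + β) * (ψ b - ψ a) ^ β) ≤
        (ψ b - ψ a) ^ (α + β - 1) / Real.Gamma (α + β) := by
    rw [div_le_div_iff₀ (by positivity) hΓ]
    have := mul_le_mul hA1 hB1 hB0 hLβ.le
    nlinarith
  have e2 : 0 ≤ (ψ t - ψ a) ^ β * (ψ b - ψ τ) ^ (α + β - 1) /
        (Real.Gamma (α + β) * (ψ b - ψ a) ^ β) := by positivity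
  have e3 : (max (ψ t - ψ τ) 0) ^ (α + β - 1) / Real.Gamma (α + β) ≤
      (ψ b - ψ a) ^ (α + β - 1) / Real.Gamma (α + β) := by gcongr
  have e4 : 0 ≤ (max (ψ t - ψ τ) 0) ^ (α + β - 1) / Real.Gamma (α + β) := by positivity
  rw [abs_le]
  constructor <;> linarith

lemma Gc_cont_left {a b α β : ℝ} {ψ : ℝ → ℝ} (hαβ : 1 < α + β)
    (hc : ContinuousOn ψ (Icc a b)) (t : ℝ) :
    ContinuousOn (fun τ => Gc a b α β ψ τ t) (Icc a b) := by
  unfold Gc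
  have h : 0 ≤ α + β - 1 := by linarith
  refine ContinuousOn.sub (ContinuousOn.div_const (continuousOn_const.mul
    (ContinuousOn.rpow_const (continuousOn_const.sub hc) fun _ _ => Or.inr h)) _)
    (ContinuousOn.div_const (ContinuousOn.rpow_const ?_ fun _ _ => Or.inr h) _)
  exact (continuousOn_const.sub hc).sup continuousOn_const

lemma Gc_cont_right {a b α β : ℝ} {ψ : ℝ → ℝ} (hβ0 : 0 < β) (hαβ : 1 < α + β)
    (hc : ContinuousOn ψ (Icc a b)) (τ : ℝ) :
    ContinuousOn (fun t => Gc a b α β ψ τ t) (Icc a b) := by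
  unfold Gc
  have h : 0 ≤ α + β - 1 := by linarith
  refine ContinuousOn.sub (ContinuousOn.div_const (ContinuousOn.mul
    (ContinuousOn.rpow_const (hc.sub continuousOn_const) fun _ _ => Or.inr hβ0.le)
    continuousOn_const) _)
    (ContinuousOn.div_const (ContinuousOn.rpow_const ?_ fun _ _ => Or.inr h) _)
  exact (hc.sub continuousOn_const).sup continuousOn_const

theorem existence_and_uniqueness_of_mild_solution
    (a b α β κ₄ : ℝ) (hab : a < b)
    (hα0 : 0 < α) (hα1 : α ≤ 1) (hβ0 : 0 < β) (hβ1 : β ≤ 1) (hαβ : 1 < α + β)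
    (ψ ψd : ℝ → ℝ)
    (hψ : ∀ t ∈ Set.Icc a b, HasDerivAt ψ (ψd t) t)
    (hψd_cont : ContinuousOn ψd (Set.Icc a b))
    (hψd_pos : ∀ t ∈ Set.Icc a b, 0 < ψd t)
    (f : ℝ → ℝ → ℝ) (𝒢 : (ℝ → ℝ) → ℝ) (κ₃ : ℝ → ℝ)
    (hκ₃_meas : AEStronglyMeasurable κ₃ (volume.restrict (Set.Ioo a b)))
    (hκ₃_nonneg : ∀ t ∈ Set.Ioo a b, 0 ≤ κ₃ t)
    (hκ₃_int : IntervalIntegrable (fun t => ψd t * κ₃ t) volume a b)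
    (hf_lip : ∀ t ∈ Set.Ioo a b, ∀ u v : ℝ, |f t u - f t v| ≤ κ₃ t * |u - v|)
    (hκ₄0 : 0 < κ₄) (hκ₄1 : κ₄ < 1)
    (h𝒢_lip : ∀ x y : ℝ → ℝ, ContinuousOn x (Set.Icc a b) →
      ContinuousOn y (Set.Icc a b) →
      |𝒢 x - 𝒢 y| ≤ κ₄ * supNorm a b (fun t => x t - y t))
    (hf_meas : ∀ u : ℝ,
      AEStronglyMeasurable (fun t => f t u) (volume.restrict (Set.Ioo a b)))
    (hf0_int : IntervalIntegrable (fun t => ψd t * f t 0) volume a b)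
    (hcontraction : κ₄ + (ψ b - ψ a) ^ (α + β - 1) / Real.Gamma (α + β) *
      (∫ τ in a..b, ψd τ * κ₃ τ) < 1) :
    ∃ x : ℝ → ℝ, (ContinuousOn x (Set.Icc a b) ∧
      ∀ t ∈ Set.Icc a b,
        x t = ((ψ t - ψ a) / (ψ b - ψ a)) ^ β * 𝒢 x +
          ∫ τ in a..b, G a b α β ψ τ t * ψd τ * f τ (x τ)) ∧
      ∀ y : ℝ → ℝ, ContinuousOn y (Set.Icc a b) →
        (∀ t ∈ Set.Icc a b,
          y t = ((ψ t - ψ a) / (ψ b - ψ a)) ^ β * 𝒢 y +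
            ∫ τ in a..b, G a b α β ψ τ t * ψd τ * f τ (y τ)) →
        ∀ t ∈ Set.Icc a b, y t = x t := by
  have ha : a ∈ Icc a b := ⟨le_rfl, hab.le⟩
  have hb : b ∈ Icc a b := ⟨hab.le, le_rfl⟩
  have hc : ContinuousOn ψ (Icc a b) := fun t ht => (hψ t ht).continuousAt.continuousWithinAt
  have hm : StrictMonoOn ψ (Icc a b) := by
    refine strictMonoOn_of_deriv_pos (convex_Icc a b) hc fun t ht => ?_
    have ht' := interior_subset ht
    rw [(hψ t ht').deriv]
    exact hψd_pos t ht'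
  have hL : 0 < ψ b - ψ a := sub_pos.2 (hm ha hb hab)
  set Gm : ℝ := (ψ b - ψ a) ^ (α + β - 1) / Real.Gamma (α + β) with hGm
  have hΓ : 0 < Real.Gamma (α + β) := Real.Gamma_pos_of_pos (by linarith)
  have hGm0 : 0 ≤ Gm := by positivity
  simp only [intervalIntegral.integral_of_le hab.le, integral_Ioc_eq_integral_Ioo] at hcontraction ⊢
  rw [intervalIntegrable_iff_integrableOn_Ioo_of_le hab.le] at hκ₃_int hf0_int
  set μ := volume.restrict (Ioo a b) with hμ
  have hmem : ∀ᵐ τ ∂μ, τ ∈ Ioo a b := ae_restrict_mem measurableSet_Ioo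
  have hψdm : AEStronglyMeasurable ψd μ :=
    (hψd_cont.mono Ioo_subset_Icc_self).aestronglyMeasurable measurableSet_Ioo
  set I : ℝ := ∫ τ in Ioo a b, ψd τ * κ₃ τ with hI
  have hI0 : 0 ≤ I := by
    refine integral_nonneg_of_ae ?_
    filter_upwards [hmem] with τ hτ
    exact mul_nonneg (hψd_pos τ (Ioo_subset_Icc_self hτ)).le (hκ₃_nonneg τ hτ)
  -- the extension operator
  let E : C(Icc a b, ℝ) → ℝ → ℝ := fun x => IccExtend hab.le x
  have hE : ∀ x, Continuous (E x) := fun x => x.continuous.Icc_extend'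
  have hEb : ∀ x y : C(Icc a b, ℝ), ∀ t, |E x t - E y t| ≤ dist x y := fun x y t =>
    ContinuousMap.dist_apply_le_dist (f := x) (g := y) _
  have hEv : ∀ (x : C(Icc a b, ℝ)) (t : ℝ) (ht : t ∈ Icc a b), E x t = x ⟨t, ht⟩ :=
    fun x t ht => IccExtend_of_mem hab.le x ht
  have hg : ∀ x : C(Icc a b, ℝ), Integrable (fun τ => ψd τ * f τ (E x τ)) μ := by
    intro x
    refine Integrable.mono' (hf0_int.norm.add (hκ₃_int.mul_const (dist x 0)))
      (hψdm.mul (aux_carath f κ₃ hf_lip hf_meas _ (hE x))) ?_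
    filter_upwards [hmem] with τ hτ
    have hp := hψd_pos τ (Ioo_subset_Icc_self hτ)
    have h1 := hf_lip τ hτ (E x τ) 0
    have h2 : |E x τ - 0| ≤ dist x 0 := hEb x 0 τ
    have h3 := hκ₃_nonneg τ hτ
    have h4 : |f τ (E x τ)| ≤ |f τ 0| + κ₃ τ * dist x 0 := by
      have h5 := abs_sub_abs_le_abs_sub (f τ (E x τ)) (f τ 0)
      have h6 := mul_le_mul_of_nonneg_left h2 h3
      linarith
    simp only [Pi.add_apply, Real.norm_eq_abs, abs_mul, abs_of_pos hp]
    calc _ ≤ ψd τ * (|f τ 0| + κ₃ τ * dist x 0) := by gcongr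
      _ = _ := by ring
  have hGG : ∀ t ∈ Icc a b, ∀ τ ∈ Ioo a b, G a b α β ψ τ t = Gc a b α β ψ τ t :=
    fun t ht τ hτ => G_eq_Gc hαβ hm.monotoneOn (Ioo_subset_Icc_self hτ) ht
  have hGb : ∀ t ∈ Icc a b, ∀ τ ∈ Ioo a b, |Gc a b α β ψ τ t| ≤ Gm :=
    fun t ht τ hτ => Gc_bound hab hβ0 hαβ hm (Ioo_subset_Icc_self hτ) ht
  have hGmeas : ∀ t, AEStronglyMeasurable (fun τ => Gc a b α β ψ τ t) μ := fun t =>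
    ((Gc_cont_left hαβ hc t).mono Ioo_subset_Icc_self).aestronglyMeasurable measurableSet_Ioo
  have hGint : ∀ (x : C(Icc a b, ℝ)) (t : ℝ), t ∈ Icc a b →
      Integrable (fun τ => Gc a b α β ψ τ t * (ψd τ * f τ (E x τ))) μ := by
    intro x t ht
    refine (hg x).bdd_mul (c := Gm) (hGmeas t) ?_
    filter_upwards [hmem] with τ hτ using hGb t ht τ hτ
  -- the integral operator
  let J : C(Icc a b, ℝ) → ℝ → ℝ := fun x t =>
    ∫ τ in Ioo a b, Gc a b α β ψ τ t * (ψd τ * f τ (E x τ))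
  have hJ : ∀ (z : ℝ → ℝ) (x : C(Icc a b, ℝ)), (∀ t ∈ Icc a b, z t = E x t) →
      ∀ t ∈ Icc a b, ∫ τ in Ioo a b, G a b α β ψ τ t * ψd τ * f τ (z τ) = J x t := by
    intro z x hzx t ht
    refine setIntegral_congr_fun measurableSet_Ioo fun τ hτ => ?_
    simp only [hGG t ht τ hτ, hzx τ (Ioo_subset_Icc_self hτ), mul_assoc]
  have hJc : ∀ x, ContinuousOn (J x) (Icc a b) := by
    intro x
    refine continuousOn_of_dominated (bound := fun τ => Gm * |ψd τ * f τ (E x τ)|)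
      (fun t ht => (hGint x t ht).aestronglyMeasurable) ?_ ((hg x).norm.const_mul Gm) ?_
    · intro t ht
      filter_upwards [hmem] with τ hτ
      rw [Real.norm_eq_abs, abs_mul]
      exact mul_le_mul_of_nonneg_right (hGb t ht τ hτ) (abs_nonneg _)
    · filter_upwards with τ
      exact (Gc_cont_right hβ0 hαβ hc τ).mul continuousOn_const
  let w : ℝ → ℝ := fun t => ((ψ t - ψ a) / (ψ b - ψ a)) ^ β
  have hw : ContinuousOn w (Icc a b) :=
    ((hc.sub continuousOn_const).div_const _).rpow_const fun _ _ => Or.inr hβ0.le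
  have hw1 : ∀ t ∈ Icc a b, |w t| ≤ 1 := by
    intro t ht
    have h1 := hm.monotoneOn ha ht ht.1
    have h2 := hm.monotoneOn ht hb ht.2
    have h3 : 0 ≤ (ψ t - ψ a) / (ψ b - ψ a) := div_nonneg (by linarith) hL.le
    rw [abs_of_nonneg (Real.rpow_nonneg h3 _)]
    exact Real.rpow_le_one h3 ((div_le_one hL).2 (by linarith)) hβ0.le
  let T : C(Icc a b, ℝ) → C(Icc a b, ℝ) := fun x =>
    ⟨(Icc a b).restrict (fun t => w t * 𝒢 (E x) + J x t),
      ((hw.mul continuousOn_const).add (hJc x)).restrict⟩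
  have hne : Nonempty (Icc a b) := ⟨⟨a, ha⟩⟩
  have hJl : ∀ x y : C(Icc a b, ℝ), ∀ t ∈ Icc a b, |J x t - J y t| ≤ Gm * I * dist x y := by
    intro x y t ht
    have h1 : J x t - J y t = ∫ τ in Ioo a b, (Gc a b α β ψ τ t * (ψd τ * f τ (E x τ)) -
        Gc a b α β ψ τ t * (ψd τ * f τ (E y τ))) :=
      (integral_sub (hGint x t ht) (hGint y t ht)).symm
    have h2 : Gm * I * dist x y = ∫ τ in Ioo a b, Gm * (ψd τ * κ₃ τ) * dist x y := by
      rw [integral_mul_const, integral_const_mul]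
    rw [h1, h2, ← Real.norm_eq_abs]
    refine norm_integral_le_of_norm_le ((hκ₃_int.const_mul Gm).mul_const _) ?_
    filter_upwards [hmem] with τ hτ
    have hp := hψd_pos τ (Ioo_subset_Icc_self hτ)
    have h3 := hκ₃_nonneg τ hτ
    rw [← mul_sub, ← mul_sub, Real.norm_eq_abs, abs_mul, abs_mul, abs_of_pos hp]
    calc _ ≤ Gm * (ψd τ * (κ₃ τ * dist x y)) := by
          refine mul_le_mul (hGb t ht τ hτ) ?_ (by positivity) hGm0
          refine mul_le_mul_of_nonneg_left ((hf_lip τ hτ _ _).trans ?_) hp.le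
          exact mul_le_mul_of_nonneg_left (hEb x y τ) h3
      _ = _ := by ring
  have hGl : ∀ x y : C(Icc a b, ℝ), |𝒢 (E x) - 𝒢 (E y)| ≤ κ₄ * dist x y := by
    intro x y
    refine (h𝒢_lip _ _ (hE x).continuousOn (hE y).continuousOn).trans ?_
    refine mul_le_mul_of_nonneg_left ?_ hκ₄0.le
    exact ciSup_le fun t => hEb x y t
  have hK0 : 0 ≤ κ₄ + Gm * I := by positivity
  have hT : ContractingWith (κ₄ + Gm * I).toNNReal T := by
    refine ⟨by rw [← NNReal.coe_lt_coe, Real.coe_toNNReal _ hK0]; simpa using hcontraction, ?_⟩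
    refine LipschitzWith.of_dist_le_mul fun x y => ?_
    rw [Real.coe_toNNReal _ hK0, ContinuousMap.dist_le (by positivity)]
    rintro ⟨t, ht⟩
    change |(w t * 𝒢 (E x) + J x t) - (w t * 𝒢 (E y) + J y t)| ≤ _
    have e : (w t * 𝒢 (E x) + J x t) - (w t * 𝒢 (E y) + J y t) =
      w t * (𝒢 (E x) - 𝒢 (E y)) + (J x t - J y t) := by ring
    rw [e]
    refine (abs_add_le _ _).trans ?_
    rw [abs_mul, add_mul]
    refine add_le_add ?_ (hJl x y t ht)
    have := mul_le_mul (hw1 t ht) (hGl x y) (abs_nonneg _) zero_le_one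
    linarith
  have hfix : T hT.fixedPoint = hT.fixedPoint := hT.fixedPoint_isFixedPt
  refine ⟨E hT.fixedPoint, ⟨(hE _).continuousOn, fun t ht => ?_⟩, fun y hy hys t ht => ?_⟩
  · rw [hJ _ hT.fixedPoint (fun _ _ => rfl) t ht, hEv _ t ht]
    conv_lhs => rw [← hfix]
    rfl
  · let y' : C(Icc a b, ℝ) := ⟨(Icc a b).restrict y, hy.restrict⟩
    have hyy : ∀ t ∈ Icc a b, y t = E y' t := fun t ht => (hEv y' t ht).symm
    have h𝒢 : 𝒢 y = 𝒢 (E y') := by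
      have h := h𝒢_lip y (E y') hy (hE y').continuousOn
      have h0 : supNorm a b (fun t => y t - E y' t) = 0 := by
        unfold supNorm
        have : ∀ t : Icc a b, |y t - E y' t| = 0 := fun t => by rw [hyy t t.2]; simp
        simp only [this, ciSup_const]
      rw [h0, mul_zero] at h
      exact sub_eq_zero.1 (abs_nonpos_iff.1 h)
    have hy' : T y' = y' := by
      ext ⟨s, hs⟩
      change w s * 𝒢 (E y') + J y' s = y s
      rw [hys s hs, hJ y y' hyy s hs, h𝒢]
    rw [hyy t ht, hT.fixedPoint_unique hy']
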